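/- Let N ≥ 2 be an integer. The real N × N matrix C indexed by ℤ/Nℤ with entries C(a,b) = (1/N)·f(b − a) is symmetric and positive semidefinite; equivalently, for every vector d : ℤ/Nℤ → ℝ one has ∑_{a,b ∈ ℤ/Nℤ} f(b − a)·d(a)·d(b) ≥ 0. -/

import Mathlib

/-!
The function `f` is, up to the factor `1 / N`, the autocorrelation of the centred sawtooth
`g(x) = x - (N - 1)/2` on `ℤ/Nℤ`: one has `N f(b - a) = ∑ c, g(c - a) g(c - b)`
(`sum_sawtooth_mul_sawtooth`). Hence the matrix `(f(b - a))` is `1 / N` times a Gram matrix, and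
its quadratic form at `d` is `(1 / N) ∑ c, (∑ a, d a * g(c - a))²`. The autocorrelation is computed
by splitting the sum over representatives `0 ≤ i < N` at the point where `i + k` wraps around
modulo `N`, which leaves two sums of quadratic polynomials.
-/

/-- The centred sawtooth `x - (N - 1)/2` on `ℤ/Nℤ`, with `x` read in `{0, …, N - 1}`. -/
noncomputable def sawtooth (N : ℕ) (x : ZMod N) : ℝ := (x.val : ℝ) - ((N : ℝ) - 1) / 2

/-- The function `f` of the statement on residue classes. -/
noncomputable def corr (N : ℕ) (x : ZMod N) : ℝ :=
  (x.val : ℝ) * ((x.val : ℝ) - (N : ℝ)) / 2 + ((N : ℝ) ^ 2 - 1) / 12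

lemma sum_range_quadratic (n : ℕ) (p q : ℝ) :
    ∑ i ∈ Finset.range n, ((i : ℝ) + p) * ((i : ℝ) + q)
      = (n - 1) * n * (2 * n - 1) / 6 + (p + q) * (n * (n - 1) / 2) + n * p * q := by
  induction n with
  | zero => simp
  | succ n ih =>
    rw [Finset.sum_range_succ, ih]
    push_cast
    ring

lemma sum_zmod_eq_sum_range (N : ℕ) [NeZero N] (F : ℕ → ℝ) :
    ∑ c : ZMod N, F c.val = ∑ i ∈ Finset.range N, F i := by
  refine Finset.sum_bij (fun c _ => c.val) ?_ ?_ ?_ ?_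
  · intro c _
    exact Finset.mem_range.2 c.val_lt
  · intro a _ b _ h
    exact ZMod.val_injective N h
  · intro i hi
    exact ⟨(i : ZMod N), Finset.mem_univ _, ZMod.val_cast_of_lt (Finset.mem_range.1 hi)⟩
  · intro c _
    rfl

lemma sum_sawtooth_add_mul_sawtooth (N : ℕ) [NeZero N] (k : ZMod N) :
    ∑ c : ZMod N, sawtooth N (c + k) * sawtooth N c = N * corr N k := by
  have hk := k.val_lt
  obtain ⟨n, hn⟩ : ∃ n, N = n + k.val := ⟨N - k.val, by omega⟩
  have hN : (N : ℝ) = n + k.val := by exact_mod_cast hn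
  have h1 : ∑ c : ZMod N, sawtooth N (c + k) * sawtooth N c
      = ∑ i ∈ Finset.range N, ((((i + k.val) % N : ℕ) : ℝ) - ((N : ℝ) - 1) / 2)
          * ((i : ℝ) - ((N : ℝ) - 1) / 2) := by
    rw [← sum_zmod_eq_sum_range]
    simp only [sawtooth, ZMod.val_add]
  have h2 : ∀ F : ℕ → ℝ, ∑ i ∈ Finset.range N, F i
      = ∑ i ∈ Finset.range n, F i + ∑ j ∈ Finset.range k.val, F (n + j) := by
    intro F
    rw [← Finset.sum_range_add, ← hn]
  -- No wrap-around occurs for `i < n = N - k`.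
  have h3 : ∑ i ∈ Finset.range n, ((((i + k.val) % N : ℕ) : ℝ) - ((N : ℝ) - 1) / 2)
          * ((i : ℝ) - ((N : ℝ) - 1) / 2)
      = ∑ i ∈ Finset.range n, ((i : ℝ) + (k.val - ((N : ℝ) - 1) / 2))
          * ((i : ℝ) + (-(((N : ℝ) - 1) / 2))) := by
    refine Finset.sum_congr rfl fun i hi => ?_
    have hi := Finset.mem_range.1 hi
    rw [Nat.mod_eq_of_lt (by omega)]
    push_cast
    ring
  -- For `i = n + j` one has `i + k = N + j`, whose representative is `j`.
  have h4 : ∑ j ∈ Finset.range k.val, ((((n + j + k.val) % N : ℕ) : ℝ) - ((N : ℝ) - 1) / 2)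
          * (((n + j : ℕ) : ℝ) - ((N : ℝ) - 1) / 2)
      = ∑ j ∈ Finset.range k.val, ((j : ℝ) + (-(((N : ℝ) - 1) / 2)))
          * ((j : ℝ) + (n - ((N : ℝ) - 1) / 2)) := by
    refine Finset.sum_congr rfl fun j hj => ?_
    have hj := Finset.mem_range.1 hj
    have : (n + j + k.val) % N = j := by
      rw [show n + j + k.val = j + N by omega, Nat.add_mod_right, Nat.mod_eq_of_lt (by omega)]
    rw [this]
    push_cast
    ring
  rw [h1, h2, h3, h4, sum_range_quadratic, sum_range_quadratic, corr, hN]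
  ring

/-- `N f(b - a)` is the Gram matrix of the translates of the sawtooth. -/
lemma sum_sawtooth_mul_sawtooth (N : ℕ) [NeZero N] (a b : ZMod N) :
    ∑ c : ZMod N, sawtooth N (c - a) * sawtooth N (c - b) = N * corr N (b - a) := by
  rw [← sum_sawtooth_add_mul_sawtooth, ← Equiv.sum_comp (Equiv.addRight b)]
  refine Finset.sum_congr rfl fun c _ => ?_
  simp only [Equiv.coe_addRight, add_sub_cancel_right, add_sub_assoc]

lemma corr_eq (N : ℕ) [NeZero N] (a b : ZMod N) :
    corr N (b - a) = (1 / (N : ℝ)) * ∑ c : ZMod N, sawtooth N (c - a) * sawtooth N (c - b) := by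
  have hN : (N : ℝ) ≠ 0 := NeZero.ne _
  rw [sum_sawtooth_mul_sawtooth]
  field_simp

lemma corr_posSemidef (N : ℕ) [NeZero N] :
    (Matrix.of (fun a b : ZMod N => (1 / (N : ℝ)) * corr N (b - a))).PosSemidef := by
  have h : Matrix.of (fun a b : ZMod N => (1 / (N : ℝ)) * corr N (b - a))
      = ((1 / (N : ℝ)) * (1 / (N : ℝ))) •
        ((Matrix.of fun c a : ZMod N => sawtooth N (c - a)).conjTranspose *
          (Matrix.of fun c a : ZMod N => sawtooth N (c - a))) := by
    ext a b
    simp [Matrix.mul_apply, corr_eq, mul_assoc]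
  rw [h]
  exact (Matrix.posSemidef_conjTranspose_mul_self _).smul (by positivity)

lemma corr_quadratic_nonneg (N : ℕ) [NeZero N] (d : ZMod N → ℝ) :
    0 ≤ ∑ a : ZMod N, ∑ b : ZMod N, corr N (b - a) * d a * d b := by
  have h : ∑ a : ZMod N, ∑ b : ZMod N, corr N (b - a) * d a * d b
      = (1 / (N : ℝ)) * ∑ c : ZMod N, (∑ a : ZMod N, d a * sawtooth N (c - a)) ^ 2 := by
    simp only [corr_eq, sq, Finset.mul_sum, Finset.sum_mul]
    conv_rhs => rw [Finset.sum_comm]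
    refine Finset.sum_congr rfl fun a _ => ?_
    conv_rhs => rw [Finset.sum_comm]
    refine Finset.sum_congr rfl fun b _ => Finset.sum_congr rfl fun c _ => ?_
    ring
  rw [h]
  positivity

/-- Let `N ≥ 2`.  With `f(i) = i(i - N)/2 + (N² - 1)/12` (evaluated on the canonical
representative in `{0, …, N-1}` of a residue class), the real `N × N` matrix indexed by
`ℤ/Nℤ` with entries `C(a,b) = (1/N)·f(b - a)` is symmetric and positive semidefinite;
equivalently, `∑_{a,b} f(b - a)·d(a)·d(b) ≥ 0` for every `d : ℤ/Nℤ → ℝ`. -/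
theorem stmt_11 (N : ℕ) [NeZero N] (hN : 2 ≤ N) :
    (Matrix.of (fun a b : ZMod N =>
        (1 / (N : ℝ)) *
          (((b - a).val : ℝ) * (((b - a).val : ℝ) - (N : ℝ)) / 2
            + ((N : ℝ) ^ 2 - 1) / 12))).IsSymm ∧
    (Matrix.of (fun a b : ZMod N =>
        (1 / (N : ℝ)) *
          (((b - a).val : ℝ) * (((b - a).val : ℝ) - (N : ℝ)) / 2
            + ((N : ℝ) ^ 2 - 1) / 12))).PosSemidef ∧
    ∀ d : ZMod N → ℝ,
      0 ≤ ∑ a : ZMod N, ∑ b : ZMod N,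
        (((b - a).val : ℝ) * (((b - a).val : ℝ) - (N : ℝ)) / 2
          + ((N : ℝ) ^ 2 - 1) / 12) * d a * d b := by
  have hpsd := corr_posSemidef N
  refine ⟨?_, hpsd, corr_quadratic_nonneg N⟩
  have hsymm := hpsd.isHermitian
  rwa [Matrix.IsHermitian, Matrix.conjTranspose_eq_transpose_of_trivial] at hsymm
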